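/- Let H be a Hilbert space, T a self-adjoint operator on H bounded from below with lower bound γ_T, and V a symmetric operator with D(T) ⊆ D(V) such that ‖V h‖ ≤ a‖h‖ + b‖T h‖ for all h ∈ D(T), where 0 ≤ b < 1. Then T + V (with domain D(T)) is self-adjoint and bounded from below, with lower bound γ = γ_T − max{a/(1−b), a + b|γ_T|}. -/

import Mathlib

open scoped RealInnerProductSpace

/-!
Write `g` for the lower bound of `T`, fix `l < g` and put `δ = g - l`, `S = T - l ≥ δ`.

* Since `T` is self-adjoint, `S` maps `D(T)` onto `H` (`surjective_sub_smul`): the range is closed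
  because `S` is bounded from below and `T` is closed, and a vector orthogonal to the range is an
  eigenvector of `T† = T` with eigenvalue `l`, hence zero.
* Expanding squares, `‖T x‖ ≤ max 1 (|g| / δ) * ‖S x‖` and `‖x‖ ≤ ‖S x‖ / δ`. So as soon as
  `δ > max (a / (1 - b)) (a + b |g|)`, there is `c < 1` with `‖V x‖ ≤ c ‖S x‖`
  (`relative_bound_lt_one`).
* Then `S + V = (1 + V S⁻¹) S` is onto by a Neumann series (`surjective_add`), and a densely
  defined symmetric operator `A` with `A - l` onto for a real `l` is self-adjoint
  (`isSelfAdjoint_of_surjective`).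
* For the lower bound, `|⟪x, V x⟫| ≤ ⟪x, S x⟫` follows from `‖V x‖ ≤ ‖S x‖` by an argument in the
  style of Krein and Lax (`nonneg_form_add`) which uses no spectral theorem: `M = S⁻¹ V` is
  symmetric for the form `⟪x, S y⟫`, so `n ↦ ⟪Mⁿ x, S Mⁿ x⟫` is convex; it is also bounded, hence
  nonincreasing.
  This gives `T + V ≥ l` for every `l < γ`, and one lets `l` tend to `γ`.
-/

section Helpers

variable {H : Type*} [NormedAddCommGroup H] [InnerProductSpace ℝ H]

lemma mul_norm_le_of_form_bound {x y : H} {δ : ℝ} (h : δ * ‖x‖ ^ 2 ≤ ⟪x, y⟫) :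
    δ * ‖x‖ ≤ ‖y‖ := by
  rcases (norm_nonneg x).eq_or_lt with h0 | h0
  · rw [← h0]; simp
  · have h1 := real_inner_le_norm x y
    nlinarith

lemma isSelfAdjoint_of_surjective [CompleteSpace H] (A : H →ₗ.[ℝ] H)
    (hd : Dense (A.domain : Set H))
    (hs : ∀ x y : A.domain, ⟪(x : H), A y⟫ = ⟪A x, (y : H)⟫) (l : ℝ)
    (hsurj : ∀ f : H, ∃ x : A.domain, A x - l • (x : H) = f) : IsSelfAdjoint A := by
  rw [LinearPMap.isSelfAdjoint_def]
  have hle : A ≤ A.adjoint :=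
    LinearPMap.IsFormalAdjoint.le_adjoint hd (fun x y => (hs x y).symm)
  refine (LinearPMap.eq_of_le_of_domain_eq hle (le_antisymm hle.1 ?_)).symm
  intro y hy
  obtain ⟨x, hx⟩ := hsurj (A.adjoint ⟨y, hy⟩ - l • y)
  -- `y - x` is orthogonal to the range of `A - l`, which is everything.
  have key : ∀ u : A.domain, ⟪y - (x : H), A u - l • (u : H)⟫ = 0 := by
    intro u
    have h1 : ⟪A.adjoint ⟨y, hy⟩, (u : H)⟫ = ⟪y, A u⟫ :=
      LinearPMap.adjoint_isFormalAdjoint hd ⟨y, hy⟩ u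
    have h2 := congrArg (fun z => ⟪z, (u : H)⟫) hx
    have h3 := hs x u
    simp only [inner_sub_left, inner_sub_right, real_inner_smul_left, real_inner_smul_right]
      at h2 ⊢
    linarith
  obtain ⟨u, hu⟩ := hsurj (y - x)
  have h0 := key u
  rw [hu, inner_self_eq_zero, sub_eq_zero] at h0
  rw [h0]
  exact x.2

/-- If `T` is self-adjoint and `T - l` is bounded from below by `δ > 0`, then `T - l` is onto. -/
lemma surjective_sub_smul [CompleteSpace H] (T : H →ₗ.[ℝ] H) (hT : IsSelfAdjoint T) (l δ : ℝ)
    (hδ : 0 < δ) (hb : ∀ x : T.domain, δ * ‖(x : H)‖ ^ 2 ≤ ⟪(x : H), T x - l • (x : H)⟫) :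
    Function.Surjective (T.toFun - l • T.domain.subtype) := by
  set S : T.domain →ₗ[ℝ] H := T.toFun - l • T.domain.subtype with hS
  have hSa : ∀ x, S x = T x - l • (x : H) := fun x => rfl
  have hd := hT.dense_domain
  have hTa : T.adjoint = T := LinearPMap.isSelfAdjoint_def.mp hT
  have hbd : ∀ x : T.domain, δ * ‖(x : H)‖ ≤ ‖S x‖ := fun x =>
    mul_norm_le_of_form_bound (hb x)
  have hclosed : IsClosed (S.range : Set H) := by
    refine IsSeqClosed.isClosed ?_
    intro f z hf hz
    choose x hx using hf
    have hc : CauchySeq (fun n => (x n : H)) := by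
      have hfc := hz.cauchySeq
      rw [Metric.cauchySeq_iff] at hfc ⊢
      intro ε hε
      obtain ⟨N, hN⟩ := hfc (δ * ε) (by positivity)
      refine ⟨N, fun m hm n hn => ?_⟩
      have h1 := hN m hm n hn
      have h2 := hbd (x m - x n)
      rw [map_sub, hx, hx, ← dist_eq_norm, Submodule.coe_sub, ← dist_eq_norm] at h2
      exact lt_of_mul_lt_mul_left (h2.trans_lt h1) hδ.le
    obtain ⟨w, hw⟩ := cauchySeq_tendsto_of_complete hc
    have hTx : Filter.Tendsto (fun n => T (x n)) Filter.atTop (nhds (z + l • w)) := by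
      refine (hz.add (hw.const_smul l)).congr fun n => ?_
      rw [← hx, hSa]; abel
    have hmem : (w, z + l • w) ∈ T.graph := by
      have hcl : IsClosed (T.graph : Set (H × H)) := hT.isClosed
      exact hcl.mem_of_tendsto (hw.prodMk_nhds hTx)
        (Filter.Eventually.of_forall fun n => T.mem_graph (x n))
    obtain ⟨y, hy1, hy2⟩ := (LinearPMap.mem_graph_iff T).mp hmem
    refine ⟨y, ?_⟩
    rw [hSa, hy2]
    simp only at hy1
    rw [hy1]; exact add_sub_cancel_right z (l • w)
  have hbot : S.rangeᗮ = ⊥ := by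
    rw [Submodule.eq_bot_iff]
    intro w hw
    have hw' : ∀ x : T.domain, ⟪l • w, (x : H)⟫ = ⟪w, T x⟫ := by
      intro x
      have h1 := (Submodule.mem_orthogonal' _ _).mp hw (S x) ⟨x, rfl⟩
      rw [hSa, inner_sub_right, real_inner_smul_right] at h1
      rw [real_inner_smul_left]; linarith
    have hmem : w ∈ T.adjoint.domain :=
      LinearPMap.mem_adjoint_domain_of_exists w ⟨l • w, hw'⟩
    rw [hTa] at hmem
    have h2 := hb ⟨w, hmem⟩
    have h3 := hw' ⟨w, hmem⟩
    simp only [inner_sub_right, real_inner_smul_right, real_inner_smul_left] at h2 h3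
    have h4 : ‖w‖ ^ 2 ≤ 0 := by nlinarith
    exact norm_eq_zero.mp (pow_eq_zero_iff two_ne_zero |>.mp (le_antisymm h4 (sq_nonneg _)))
  have : CompleteSpace S.range := hclosed.completeSpace_coe
  rw [← LinearMap.range_eq_top]
  exact (Submodule.orthogonal_eq_bot_iff).mp hbot

/-- A perturbation `W` that is `S`-bounded with constant `c < 1` keeps a bijection `S` onto. -/
lemma surjective_add [CompleteSpace H] {D : Submodule ℝ H} (S W : D →ₗ[ℝ] H)
    (hS : Function.Bijective S) (c : ℝ) (hc1 : c < 1)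
    (hW : ∀ x, ‖W x‖ ≤ c * ‖S x‖) : Function.Surjective (S + W) := by
  let e := LinearEquiv.ofBijective S hS
  have he : ∀ z, S (e.symm z) = z := fun z => e.apply_symm_apply z
  let K : H →L[ℝ] H := (-(W ∘ₗ e.symm.toLinearMap)).mkContinuous (max c 0) (by
    intro z
    have h := hW (e.symm z)
    rw [he] at h
    simpa using h.trans (mul_le_mul_of_nonneg_right (le_max_left c 0) (norm_nonneg z)))
  have hK : ‖K‖ < 1 :=
    (LinearMap.mkContinuous_norm_le _ (le_max_right _ _) _).trans_lt (max_lt hc1 one_pos)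
  obtain ⟨U, hU⟩ := isUnit_one_sub_of_norm_lt_one hK
  intro f
  refine ⟨e.symm (((U⁻¹ : (H →L[ℝ] H)ˣ) : H →L[ℝ] H) f), ?_⟩
  have h1 : ((U : H →L[ℝ] H) * ((U⁻¹ : (H →L[ℝ] H)ˣ) : H →L[ℝ] H)) f = f := by simp
  rw [hU] at h1
  simpa [K, he] using h1

lemma le_of_convex_of_bounded (p : ℕ → ℝ) (C : ℝ) (hC : ∀ n, p n ≤ C)
    (hp : ∀ n, 2 * p (n + 1) ≤ p n + p (n + 2)) : p 1 ≤ p 0 := by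
  by_contra! h
  have h1 : ∀ n, p 1 - p 0 ≤ p (n + 1) - p n := by
    intro n
    induction n with
    | zero => simp
    | succ k ih => linarith [hp k]
  have h2 : ∀ n : ℕ, p 0 + n * (p 1 - p 0) ≤ p n := by
    intro n
    induction n with
    | zero => simp
    | succ k ih => push_cast; linarith [h1 k]
  obtain ⟨n, hn⟩ := Archimedean.arch (C - p 0 + 1) (sub_pos.mpr h)
  rw [nsmul_eq_mul] at hn
  linarith [h2 n, hC n]

/-- If `S ≥ δ > 0` is symmetric and onto, and `W` is symmetric with `‖W x‖ ≤ ‖S x‖`, then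
`S + W ≥ 0`. -/
lemma nonneg_form_add {D : Submodule ℝ H} (S W : D →ₗ[ℝ] H)
    (hSs : ∀ x y : D, ⟪(x : H), S y⟫ = ⟪S x, (y : H)⟫)
    (hWs : ∀ x y : D, ⟪(x : H), W y⟫ = ⟪W x, (y : H)⟫)
    (δ : ℝ) (hδ : 0 < δ) (hb : ∀ x : D, δ * ‖(x : H)‖ ^ 2 ≤ ⟪(x : H), S x⟫)
    (hS : Function.Surjective S) (hW : ∀ x, ‖W x‖ ≤ ‖S x‖) (x : D) :
    0 ≤ ⟪(x : H), S x⟫ + ⟪(x : H), W x⟫ := by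
  choose M hM using fun x => hS (W x)
  have hpos : ∀ y : D, 0 ≤ ⟪(y : H), S y⟫ := fun y => le_trans (by positivity) (hb y)
  let u : ℕ → D := fun n => M^[n] x
  have hu : ∀ n, S (u (n + 1)) = W (u n) := by
    intro n
    simp only [u, Function.iterate_succ_apply', hM]
  have hbound : ∀ n, ‖S (u n)‖ ≤ ‖S x‖ := by
    intro n
    induction n with
    | zero => exact le_rfl
    | succ k ih => rw [hu]; exact (hW _).trans ih
  have h10 := le_of_convex_of_bounded (fun n => ⟪(u n : H), S (u n)⟫) (‖S x‖ ^ 2 / δ)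
    (by
      intro n
      have h1 := mul_norm_le_of_form_bound (hb (u n))
      have h2 := real_inner_le_norm (u n : H) (S (u n))
      have h3 := hbound n
      rw [le_div_iff₀ hδ]
      have h4 := norm_nonneg (S (u n))
      calc ⟪(u n : H), S (u n)⟫ * δ ≤ (‖(u n : H)‖ * ‖S (u n)‖) * δ := by gcongr
        _ = (δ * ‖(u n : H)‖) * ‖S (u n)‖ := by ring
        _ ≤ ‖S (u n)‖ * ‖S (u n)‖ := by gcongr
        _ ≤ ‖S x‖ * ‖S x‖ := by gcongr
        _ = ‖S x‖ ^ 2 := by ring)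
    (by
      -- Positivity of the form at `u n - u (n + 2)`.
      intro n
      have h1 := hpos (u n - u (n + 2))
      have h2 : ⟪(u (n + 1) : H), S (u (n + 1))⟫ = ⟪(u n : H), S (u (n + 2))⟫ := by
        rw [hu n, hu (n + 1), hWs, real_inner_comm]
      have h3 : ⟪(u (n + 2) : H), S (u n)⟫ = ⟪(u n : H), S (u (n + 2))⟫ := by
        rw [hSs, real_inner_comm]
      simp only [map_sub, Submodule.coe_sub, inner_sub_left, inner_sub_right] at h1
      linarith)
  have h1 := hpos (u 0 + u 1)
  have h3 : ⟪(u 1 : H), S (u 0)⟫ = ⟪(u 0 : H), S (u 1)⟫ := by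
    rw [hSs, real_inner_comm]
  simp only [map_add, Submodule.coe_add, inner_add_left, inner_add_right] at h1
  have hM0 := hu 0
  simp only [zero_add] at hM0
  rw [hM0] at h3 h1 h10
  change _ ≤ ⟪(u 0 : H), S (u 0)⟫ at h10
  change 0 ≤ ⟪(u 0 : H), S (u 0)⟫ + ⟪(u 0 : H), W (u 0)⟫
  linarith

/-- Here `t = T x`, and `t - l • x` is `S x` with `l = g - δ`. The constant `c` is
`(a + b * max δ |g|) / δ`. -/
lemma relative_bound_lt_one (a b g δ : ℝ) (ha : 0 ≤ a) (hb0 : 0 ≤ b) (hb1 : b < 1)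
    (hδ : max (a / (1 - b)) (a + b * |g|) < δ) :
    ∃ c < 1, ∀ x t : H, g * ‖x‖ ^ 2 ≤ ⟪x, t⟫ →
      a * ‖x‖ + b * ‖t‖ ≤ c * ‖t - (g - δ) • x‖ := by
  obtain ⟨h1, h2⟩ := max_lt_iff.mp hδ
  have h0 : 0 < δ := lt_of_le_of_lt (by positivity) h2
  rw [div_lt_iff₀ (by linarith)] at h1
  refine ⟨(a + b * max δ |g|) / δ, ?_, ?_⟩
  · rw [div_lt_one h0]
    rcases max_cases δ |g| with h | h <;> rw [h.1] <;> linarith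
  · intro x t ht
    set m := max δ |g| with hm
    have hmδ : δ ≤ m := le_max_left _ _
    have hmg : |g| ≤ m := le_max_right _ _
    have hgm : g ≤ m := (le_abs_self g).trans hmg
    have hg2 : g ^ 2 ≤ m ^ 2 := by rw [← sq_abs g]; gcongr
    obtain ⟨y, rfl⟩ : ∃ y, t = y + g • x := ⟨t - g • x, by abel⟩
    have hy : 0 ≤ ⟪x, y⟫ := by
      rw [inner_add_right, real_inner_smul_right, real_inner_self_eq_norm_sq] at ht
      linarith
    have hs : y + g • x - (g - δ) • x = y + δ • x := by rw [sub_smul]; abel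
    rw [hs]
    have e : ∀ r : ℝ, ‖y + r • x‖ ^ 2 = ‖y‖ ^ 2 + 2 * r * ⟪x, y⟫ + r ^ 2 * ‖x‖ ^ 2 := by
      intro r
      rw [norm_add_sq_real, real_inner_smul_right, norm_smul, mul_pow, Real.norm_eq_abs, sq_abs,
        real_inner_comm]
      ring
    have hx : δ * ‖x‖ ≤ ‖y + δ • x‖ := by
      refine mul_norm_le_of_form_bound ?_
      rw [inner_add_right, real_inner_smul_right, real_inner_self_eq_norm_sq]
      linarith
    have ht' : δ * ‖y + g • x‖ ≤ m * ‖y + δ • x‖ := by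
      have hm0 : 0 ≤ m * ‖y + δ • x‖ := mul_nonneg (h0.le.trans hmδ) (norm_nonneg _)
      refine (le_abs_self _).trans (abs_le_of_sq_le_sq ?_ hm0)
      rw [mul_pow, mul_pow, e, e]
      have k1 : δ ^ 2 * ‖y‖ ^ 2 ≤ m ^ 2 * ‖y‖ ^ 2 := by gcongr
      have k2 : δ ^ 2 * g ≤ m ^ 2 * δ := by
        calc δ ^ 2 * g ≤ δ ^ 2 * m := by gcongr
          _ = δ * m * δ := by ring
          _ ≤ m * m * δ := by gcongr
          _ = m ^ 2 * δ := by ring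
      have k3 := mul_le_mul_of_nonneg_right k2 hy
      have k4 : δ ^ 2 * (g ^ 2 * ‖x‖ ^ 2) ≤ δ ^ 2 * (m ^ 2 * ‖x‖ ^ 2) := by gcongr
      linarith
    rw [div_mul_eq_mul_div, le_div_iff₀ h0]
    have k1 := mul_le_mul_of_nonneg_left hx ha
    have k2 := mul_le_mul_of_nonneg_left ht' hb0
    linarith

end Helpers

/-- **Kato–Rellich theorem with explicit lower bound.**
If `T` is self-adjoint and bounded from below with lower bound `γ_T`, and `V` is symmetric
with `D(T) ⊆ D(V)` and `‖V h‖ ≤ a ‖h‖ + b ‖T h‖` on `D(T)` with `0 ≤ b < 1`, then `T + V`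
is self-adjoint and bounded from below with lower bound
`γ = γ_T − max {a/(1−b), a + b |γ_T|}`. -/
theorem kato_rellich_lower_bound
    {H : Type*} [NormedAddCommGroup H] [InnerProductSpace ℝ H] [CompleteSpace H]
    (T V : H →ₗ.[ℝ] H)
    (hTV : T.domain ≤ V.domain)
    (hT : IsSelfAdjoint T)
    (γT : ℝ)
    (hTbelow : ∀ x : T.domain, γT * ‖(x : H)‖ ^ 2 ≤ ⟪(x : H), T x⟫)
    (hVdense : Dense (V.domain : Set H))
    (hVsymm : ∀ x y : V.domain, ⟪(x : H), V y⟫ = ⟪V x, (y : H)⟫)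
    (a b : ℝ) (ha : 0 ≤ a) (hb0 : 0 ≤ b) (hb1 : b < 1)
    (hbound : ∀ x : T.domain, ‖V ⟨(x : H), hTV x.2⟩‖ ≤ a * ‖(x : H)‖ + b * ‖T x‖) :
    IsSelfAdjoint (T + V) ∧
      ∀ x : (T + V).domain,
        (γT - max (a / (1 - b)) (a + b * |γT|)) * ‖(x : H)‖ ^ 2 ≤ ⟪(x : H), (T + V) x⟫ := by
  have hdom : (T + V).domain = T.domain := inf_eq_left.mpr hTV
  have hd := hT.dense_domain
  have hTs : ∀ x y : T.domain, ⟪(x : H), T y⟫ = ⟪T x, (y : H)⟫ := by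
    have h := LinearPMap.adjoint_isFormalAdjoint hd
    rw [LinearPMap.isSelfAdjoint_def.mp hT] at h
    exact fun x y => (h x y).symm
  let W : T.domain →ₗ[ℝ] H := V.toFun ∘ₗ Submodule.inclusion hTV
  have hWs : ∀ x y : T.domain, ⟪(x : H), W y⟫ = ⟪W x, (y : H)⟫ := fun x y =>
    hVsymm ⟨x, hTV x.2⟩ ⟨y, hTV y.2⟩
  have hadd : ∀ (x : H) (h : x ∈ (T + V).domain) (h' : x ∈ T.domain),
      (T + V) ⟨x, h⟩ = T ⟨x, h'⟩ + W ⟨x, h'⟩ := fun x h h' => rfl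
  have main : ∀ δ, max (a / (1 - b)) (a + b * |γT|) < δ →
      (∀ f : H, ∃ x : (T + V).domain, (T + V) x - (γT - δ) • (x : H) = f) ∧
      ∀ x : (T + V).domain, (γT - δ) * ‖(x : H)‖ ^ 2 ≤ ⟪(x : H), (T + V) x⟫ := by
    intro δ hδ
    have h0 : 0 < δ := lt_of_le_of_lt (le_max_of_le_right (by positivity)) hδ
    obtain ⟨c, hc1, hc⟩ := relative_bound_lt_one (H := H) a b γT δ ha hb0 hb1 hδ
    have hb : ∀ x : T.domain, δ * ‖(x : H)‖ ^ 2 ≤ ⟪(x : H), T x - (γT - δ) • (x : H)⟫ := by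
      intro x
      rw [inner_sub_right, real_inner_smul_right, real_inner_self_eq_norm_sq]
      linarith [hTbelow x]
    have hsurj := surjective_sub_smul T hT (γT - δ) δ h0 hb
    set S : T.domain →ₗ[ℝ] H := T.toFun - (γT - δ) • T.domain.subtype with hS
    have hSa : ∀ x, S x = T x - (γT - δ) • (x : H) := fun x => rfl
    have hW : ∀ x, ‖W x‖ ≤ c * ‖S x‖ := fun x => (hbound x).trans (hc x (T x) (hTbelow x))
    have hinj : Function.Injective S := by
      rw [injective_iff_map_eq_zero]
      intro x hx
      have h1 := mul_norm_le_of_form_bound (hb x)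
      rw [← hSa, hx, norm_zero] at h1
      have h2 : ‖(x : H)‖ ≤ 0 := by nlinarith
      exact Subtype.ext (norm_le_zero_iff.mp h2)
    constructor
    · intro f
      obtain ⟨x, hx⟩ := surjective_add S W ⟨hinj, hsurj⟩ c hc1 hW f
      refine ⟨⟨x, hdom.ge x.2⟩, ?_⟩
      rw [hadd _ _ x.2, ← hx, LinearMap.add_apply, hSa]
      simp only [Subtype.coe_eta]
      abel
    · rintro ⟨x, hx⟩
      have hx' : x ∈ T.domain := hdom.le hx
      have h1 := nonneg_form_add S W
        (by
          intro y z
          rw [hSa, hSa, inner_sub_right, inner_sub_left, real_inner_smul_right,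
            real_inner_smul_left, hTs]) hWs δ h0 hb hsurj
        (fun y => (hW y).trans (mul_le_of_le_one_left (norm_nonneg _) hc1.le)) ⟨x, hx'⟩
      rw [hSa, inner_sub_right, real_inner_smul_right, real_inner_self_eq_norm_sq] at h1
      rw [hadd _ _ hx', inner_add_right]
      linarith
  refine ⟨?_, fun x => ?_⟩
  · refine isSelfAdjoint_of_surjective (T + V) (by rw [hdom]; exact hd) ?_ _
      (main _ (lt_add_one _)).1
    rintro ⟨x, hx⟩ ⟨y, hy⟩
    have hx' : x ∈ T.domain := hdom.le hx
    have hy' : y ∈ T.domain := hdom.le hy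
    rw [hadd _ _ hx', hadd _ _ hy', inner_add_right, inner_add_left]
    exact congrArg₂ (· + ·) (hTs ⟨x, hx'⟩ ⟨y, hy'⟩) (hWs ⟨x, hx'⟩ ⟨y, hy'⟩)
  · set m := max (a / (1 - b)) (a + b * |γT|)
    -- Let `δ` decrease to `m`; `ε` is scaled by `‖x‖ ^ 2 + 1` to allow `x = 0`.
    refine le_of_forall_pos_le_add fun ε hε => ?_
    have hq : 0 < ‖(x : H)‖ ^ 2 + 1 := by positivity
    have h1 := (main (m + ε / (‖(x : H)‖ ^ 2 + 1)) (by linarith [div_pos hε hq])).2 x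
    have h2 : ε / (‖(x : H)‖ ^ 2 + 1) * ‖(x : H)‖ ^ 2 ≤ ε := by
      rw [div_mul_eq_mul_div, div_le_iff₀ hq]
      nlinarith
    linarith
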